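/- Let n ≥ 2, let P be a partition of [ω]^n, let Q ∈ P*, and let X ⊆ ℕ be infinite with [X]^{2n} ⊆ Q. For every natural number l ≥ 1, every x ∈ [X⁻]^n with d(x) ≥ n^{2l}, and every sequence (p_0,q_0), (p_1,q_1), …, (p_{l−1},q_{l−1}) of pairs from [2n]^n × [2n]^n such that Q ⊆ ⋂_{i<l} Q_{p_i q_i}, there is a 2l-cascade x_0, x_1, …, x_l with x_0 = x and x_i →_{p_i q_i} x_{i+1} for all i < l. -/

import Mathlib

/-! Common definitions. -/

/-- The `i`-th smallest element of a finite set of naturals (default 0 if `i ≥ |s|`). -/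
def nth (s : Finset ℕ) (i : ℕ) : ℕ := (s.sort (· ≤ ·)).getD i 0

/-- `[ω]^n` : the set of `n`-element subsets of `ℕ` (as `Finset`s). -/
def cube (n : ℕ) : Set (Finset ℕ) := {s | s.card = n}

/-- `P` is a partition of `Z` (one member may be empty). -/
def IsPartitionOn (Z : Set (Finset ℕ)) (P : Set (Set (Finset ℕ))) : Prop :=
  ⋃₀ P = Z ∧ ∀ A ∈ P, ∀ B ∈ P, A ∩ B = ∅ ∨ A = B

/-- The equivalence relation `≈_P` induced by a partition `P`. -/
def EquivP (P : Set (Set (Finset ℕ))) (p q : Finset ℕ) : Prop := ∃ A ∈ P, p ∈ A ∧ q ∈ A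

/-- `X` is `I`-canonical for a partition `P` of `[ω]^n`. -/
def ICanon (n : ℕ) (P : Set (Set (Finset ℕ))) (I : Set ℕ) (X : Set ℕ) : Prop :=
  ∀ p q : Finset ℕ, ↑p ⊆ X → p.card = n → ↑q ⊆ X → q.card = n →
    (EquivP P p q ↔ ∀ i ∈ I, nth p i = nth q i)

/-- `X` is canonical for a partition `P` of `[ω]^n`. -/
def Canon (n : ℕ) (P : Set (Set (Finset ℕ))) (X : Set ℕ) : Prop :=
  ∃ I : Set ℕ, I ⊆ Set.Iio n ∧ ICanon n P I X

/-- `X` is homogeneous for a partition `P` of `[ω]^n`. -/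
def Homog (n : ℕ) (P : Set (Set (Finset ℕ))) (X : Set ℕ) : Prop :=
  ∃ A ∈ P, ∀ s : Finset ℕ, ↑s ⊆ X → s.card = n → s ∈ A

/-- `[2n]^n` : the `n`-element subsets of `{0, …, 2n-1}`. -/
def idx (n : ℕ) : Finset (Finset ℕ) := Finset.powersetCard n (Finset.range (2 * n))

/-- The set `Q_{pq} = { z ∈ [ω]^{2n} : {z_[i] : i ∈ p} ≈_P {z_[i] : i ∈ q} }`. -/
def Qpq (n : ℕ) (P : Set (Set (Finset ℕ))) (p q : Finset ℕ) : Set (Finset ℕ) :=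
  {z | z.card = 2 * n ∧ EquivP P (p.image (nth z)) (q.image (nth z))}

/-- `P*` : the atoms of the field of subsets of `[ω]^{2n}` generated by the sets `Q_{pq}`. -/
def Atoms (n : ℕ) (P : Set (Set (Finset ℕ))) : Set (Set (Finset ℕ)) :=
  {Q | Q.Nonempty ∧ ∃ S : Finset ℕ → Finset ℕ → Set (Finset ℕ),
    (∀ p ∈ idx n, ∀ q ∈ idx n, S p q = Qpq n P p q ∨ S p q = cube (2 * n) \ Qpq n P p q) ∧
    Q = ⋂ p ∈ idx n, ⋂ q ∈ idx n, S p q}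

/-- `I_{pq} = { i < n : p_[i] = q_[i] }`. -/
def Ipq (n : ℕ) (p q : Finset ℕ) : Set ℕ := {i | i < n ∧ nth p i = nth q i}

/-- `I(Q) = ⋂ { I_{pq} : p, q ∈ [2n]^n, Q ⊆ Q_{pq} }`. -/
def IofQ (n : ℕ) (P : Set (Set (Finset ℕ))) (Q : Set (Finset ℕ)) : Set ℕ :=
  ⋂ p ∈ idx n, ⋂ q ∈ idx n, ⋂ (_ : Q ⊆ Qpq n P p q), Ipq n p q

/-- `ρ(a,b) = |(a △ b) ∩ X|`, identifying `a` with `{0, …, a-1}`. -/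
noncomputable def rho (X : Set ℕ) (a b : ℕ) : ℕ := (X ∩ Set.Ico (min a b) (max a b)).ncard

/-- The sparsity `d(x) = min { ρ(a,b) : a, b ∈ x ∪ {e}, a ≠ b }` (with `d(∅) = ⊤ = ω`). -/
noncomputable def sparsity (X : Set ℕ) (e : ℕ) (x : Finset ℕ) : ℕ∞ :=
  ⨅ a ∈ (x ∪ {e} : Finset ℕ), ⨅ b ∈ (x ∪ {e} : Finset ℕ), ⨅ _ : a ≠ b, (rho X a b : ℕ∞)

/-- `r(x,y) = max_{b ∈ y} min { ρ(a,b) : a ∈ x ∪ {e}, a ≤ b }`. -/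
noncomputable def rfun (X : Set ℕ) (e : ℕ) (x y : Finset ℕ) : ℕ :=
  y.sup fun b => sInf ((fun a => rho X a b) '' {a : ℕ | a ∈ (x ∪ {e} : Finset ℕ) ∧ a ≤ b})

/-- `x →_{pq} y` : there is `z ∈ [X]^{2n}` with `{z_[i] : i ∈ p} = x` and `{z_[i] : i ∈ q} = y`. -/
def Arrow (X : Set ℕ) (n : ℕ) (p q x y : Finset ℕ) : Prop :=
  ∃ z : Finset ℕ, ↑z ⊆ X ∧ z.card = 2 * n ∧ p.image (nth z) = x ∧ q.image (nth z) = y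

/-- `x ↔_Q y` : `x →_{pq} y` for some `p, q ∈ [2n]^n` with `Q ⊆ Q_{pq}`. -/
def RelQ (n : ℕ) (P : Set (Set (Finset ℕ))) (Q : Set (Finset ℕ)) (X : Set ℕ)
    (x y : Finset ℕ) : Prop :=
  ∃ p ∈ idx n, ∃ q ∈ idx n, Q ⊆ Qpq n P p q ∧ Arrow X n p q x y

/-- `x_0, …, x_l` is a `t`-cascade. -/
def IsCascade (n : ℕ) (P : Set (Set (Finset ℕ))) (Q : Set (Finset ℕ)) (X : Set ℕ) (e : ℕ)
    (t l : ℕ) (x : ℕ → Finset ℕ) : Prop :=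
  (∀ i ≤ l, ↑(x i) ⊆ X \ {e} ∧ (x i).card = n) ∧
  ∀ i < l, ((n ^ (t - 2 * i) : ℕ) : ℕ∞) ≤ sparsity X e (x i) ∧
    rfun X e (x i) (x (i + 1)) ≤ n ^ (t - 2 * i - 1) ∧
    RelQ n P Q X (x i) (x (i + 1))

/-- The `n`-fold Fubini power `u ⊗ ⋯ ⊗ u` of an ultrafilter on `ℕ`, as an
ultrafilter on `Fin n → ℕ`. -/
noncomputable def tensorPow (u : Ultrafilter ℕ) : (n : ℕ) → Ultrafilter (Fin n → ℕ)
  | 0 => pure (fun i => i.elim0)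
  | n + 1 => u.bind fun a => (tensorPow u n).map (Fin.cons a)

/-- The diagonal ultrafilter extension `f̃(u, u, …, u)` of `f : ℕ^n → ℕ`. -/
noncomputable def diagExt {n : ℕ} (f : (Fin n → ℕ) → ℕ) (u : Ultrafilter ℕ) : Ultrafilter ℕ :=
  (tensorPow u n).map f

/-- The Rudin–Keisler preorder. -/
def RKle (u v : Ultrafilter ℕ) : Prop := ∃ h : ℕ → ℕ, v.map h = u

/-- Rudin–Keisler equivalence. -/
def RKeq (u v : Ultrafilter ℕ) : Prop := RKle u v ∧ RKle v u

/-- `u` is nonprincipal: it contains no finite set. -/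
def Nonprincipal (u : Ultrafilter ℕ) : Prop := ∀ S : Set ℕ, S.Finite → S ∉ u

/-- `u` is a Ramsey ultrafilter. -/
def IsRamseyU (u : Ultrafilter ℕ) : Prop :=
  Nonprincipal u ∧ ∀ n : ℕ, 1 ≤ n → ∀ P : Set (Set (Finset ℕ)),
    IsPartitionOn (cube n) P → P.Finite → ∃ X ∈ u, Homog n P X

/-- `f : ℕ^n → ℕ` is selectively upward injective on `X` w.r.t. the index set `I`
(`I = ∅` gives "upward constant"). -/
def SelUpInjWrt (n : ℕ) (f : (Fin n → ℕ) → ℕ) (X : Set ℕ) (I : Set (Fin n)) : Prop :=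
  ∀ x y : Fin n → ℕ, (∀ i, x i ∈ X) → (∀ i, y i ∈ X) → StrictMono x → StrictMono y →
    (f x = f y ↔ ∀ i ∈ I, x i = y i)

theorem nth_eq_emb (s : Finset ℕ) (m : ℕ) (h : s.card = m) (i : ℕ) (hi : i < m) :
    nth s i = s.orderEmbOfFin h ⟨i, hi⟩ := by
  rw [Finset.orderEmbOfFin_apply]
  unfold nth
  rw [List.getD_eq_getElem _ _ (by rw [Finset.length_sort]; omega)]
  rfl

theorem nth_image (f : ℕ → ℕ) (m : ℕ) (hf : ∀ i j, i < j → j < m → f i < f j) :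
    ((Finset.range m).image f).card = m ∧
    ∀ i < m, nth ((Finset.range m).image f) i = f i := by
  have hc : ((Finset.range m).image f).card = m := by
    rw [Finset.card_image_of_injOn, Finset.card_range]
    intro a ha b hb hab
    simp only [Finset.coe_range, Set.mem_Iio] at ha hb
    rcases lt_trichotomy a b with h | h | h
    · have := hf a b h hb; omega
    · exact h
    · have := hf b a h ha; omega
  refine ⟨hc, fun i hi => ?_⟩
  rw [nth_eq_emb _ m hc i hi]
  have := Finset.orderEmbOfFin_unique hc (f := fun i : Fin m => f i)
    (fun x => Finset.mem_image.2 ⟨x, by simp, rfl⟩) (fun a b hab => hf a b hab b.2)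
  exact (congrFun this ⟨i, hi⟩).symm

theorem rho_comm' (X : Set ℕ) (a b : ℕ) : rho X a b = rho X b a := by
  unfold rho; rw [min_comm, max_comm]

theorem rho_nth (X : Set ℕ) (hX : X.Infinite) (i j : ℕ) (hij : i ≤ j) :
    rho X (Nat.nth (· ∈ X) i) (Nat.nth (· ∈ X) j) = j - i := by
  have hm : StrictMono (Nat.nth (· ∈ X)) := Nat.nth_strictMono hX
  have hle := hm.monotone hij
  unfold rho
  rw [min_eq_left hle, max_eq_right hle]
  have : X ∩ Set.Ico (Nat.nth (· ∈ X) i) (Nat.nth (· ∈ X) j) =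
      Nat.nth (· ∈ X) '' Set.Ico i j := by
    ext b
    constructor
    · rintro ⟨hb, h1, h2⟩
      have hr : b ∈ Set.range (Nat.nth (· ∈ X)) := by
        rw [Nat.range_nth_of_infinite (p := (· ∈ X)) hX]; exact hb
      obtain ⟨k, rfl⟩ := hr
      exact ⟨k, ⟨hm.le_iff_le.1 h1, hm.lt_iff_lt.1 h2⟩, rfl⟩
    · rintro ⟨k, ⟨h1, h2⟩, rfl⟩
      exact ⟨Nat.nth_mem_of_infinite hX k, hm.le_iff_le.2 h1, hm.lt_iff_lt.2 h2⟩
  rw [this, Set.ncard_image_of_injective _ hm.injective]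
  rw [← Finset.coe_Ico, Set.ncard_coe_finset, Nat.card_Ico]

theorem sparsity_iff (X : Set ℕ) (e : ℕ) (x : Finset ℕ) (N : ℕ) :
    (N : ℕ∞) ≤ sparsity X e x ↔
      ∀ a ∈ (x ∪ {e} : Finset ℕ), ∀ b ∈ (x ∪ {e} : Finset ℕ), a ≠ b → N ≤ rho X a b := by
  unfold sparsity
  simp only [le_iInf_iff, Nat.cast_le]

theorem exists_u (X : Set ℕ) (hX : X.Infinite) (e : ℕ) (he : e = Nat.nth (· ∈ X) 0)
    (n N : ℕ) (x : Finset ℕ) (hx : ↑x ⊆ X \ {e}) (hxc : x.card = n)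
    (hd : (N : ℕ∞) ≤ sparsity X e x) :
    ∃ u : ℕ → ℕ, u 0 = 0 ∧ (∀ j < n, u j + N ≤ u (j + 1)) ∧
      ∀ j < n, Nat.nth (· ∈ X) (u (j + 1)) ∈ x := by
  classical
  have hm : StrictMono (Nat.nth (· ∈ X)) := Nat.nth_strictMono hX
  rw [sparsity_iff] at hd
  have key : ∀ j, ∃ c, j < n → Nat.nth (· ∈ X) c = nth x j := by
    intro j
    by_cases hj : j < n
    · have h1 : nth x j ∈ x := by
        rw [nth_eq_emb x n hxc j hj]; exact Finset.orderEmbOfFin_mem _ _ _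
      have hr : nth x j ∈ Set.range (Nat.nth (· ∈ X)) := by
        rw [Nat.range_nth_of_infinite (p := (· ∈ X)) hX]; exact (hx h1).1
      obtain ⟨k, hk⟩ := hr
      exact ⟨k, fun _ => hk⟩
    · exact ⟨0, fun h => absurd h hj⟩
  choose c hc using key
  have hmem : ∀ j < n, Nat.nth (· ∈ X) (c j) ∈ x := by
    intro j hj
    rw [hc j hj, nth_eq_emb x n hxc j hj]; exact Finset.orderEmbOfFin_mem _ _ _
  refine ⟨fun j => Nat.casesOn j 0 c, rfl, ?_, fun j hj => hmem j hj⟩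
  have gap : ∀ a b, Nat.nth (· ∈ X) a ∈ (x ∪ {e} : Finset ℕ) →
      Nat.nth (· ∈ X) b ∈ (x ∪ {e} : Finset ℕ) → a < b → a + N ≤ b := by
    intro a b ha hb hab
    have := hd _ ha _ hb (hm hab).ne
    rw [rho_nth X hX a b hab.le] at this
    omega
  intro j hj
  rcases j with _ | j
  · apply gap
    · simp [he]
    · exact Finset.mem_union_left _ (hmem 0 hj)
    · have h0 := hx (hmem 0 hj)
      rcases Nat.eq_zero_or_pos (c 0) with h | h
      · rw [h, ← he] at h0; simp at h0
      · exact h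
  · apply gap
    · exact Finset.mem_union_left _ (hmem j (by omega))
    · exact Finset.mem_union_left _ (hmem (j+1) hj)
    · rw [← hm.lt_iff_lt]
      show Nat.nth (· ∈ X) (c j) < Nat.nth (· ∈ X) (c (j+1))
      rw [hc j (by omega), hc (j+1) hj, nth_eq_emb x n hxc j (by omega),
        nth_eq_emb x n hxc (j+1) hj]
      exact (x.orderEmbOfFin hxc).strictMono (by simp [Fin.lt_def])

theorem step (n : ℕ) (hn : 2 ≤ n) (D : ℕ) (hD : 1 ≤ D) (X : Set ℕ) (hX : X.Infinite)
    (e : ℕ) (he : e = Nat.nth (· ∈ X) 0)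
    (x : Finset ℕ) (hx : ↑x ⊆ X \ {e}) (hxc : x.card = n)
    (hd : ((n * (n * D) : ℕ) : ℕ∞) ≤ sparsity X e x)
    (p q : Finset ℕ) (hp : p ∈ idx n) (hq : q ∈ idx n) :
    ∃ y : Finset ℕ, ↑y ⊆ X \ {e} ∧ y.card = n ∧ (D : ℕ∞) ≤ sparsity X e y ∧
      rfun X e x y ≤ n * D ∧ Arrow X n p q x y := by
  classical
  have hm : StrictMono (Nat.nth (· ∈ X)) := Nat.nth_strictMono hX
  obtain ⟨u, u0, ugap, umem⟩ := exists_u X hX e he n _ x hx hxc hd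
  obtain ⟨hp1, hp2⟩ := Finset.mem_powersetCard.1 hp
  obtain ⟨hq1, hq2⟩ := Finset.mem_powersetCard.1 hq
  set C : ℕ → ℕ := fun i => Nat.count (· ∈ p) i with hC
  set W : ℕ → ℕ := fun i => if i ≠ 0 ∧ i - 1 ∈ p then u (C i) else u (C i) + D * (i - C i) with hW
  have C0 : C 0 = 0 := by simp [hC]
  have Cs : ∀ i, C (i+1) = C i + if i ∈ p then 1 else 0 := fun i => Nat.count_succ _ _
  have Cle : ∀ i, C i ≤ i := fun i => Nat.count_le _
  have Cmono : ∀ i j, i ≤ j → C i ≤ C j := fun i j h => Nat.count_monotone _ h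
  have C2n : C (2 * n) = n := by
    rw [hC]; simp only [Nat.count_eq_card_filter_range]
    rw [Finset.filter_mem_eq_inter, Finset.inter_eq_right.2 hp1, hp2]
  have Cn : ∀ i ≤ 2 * n, C i ≤ n := fun i hi => C2n ▸ Cmono i _ hi
  have CD : ∀ i ≤ 2 * n, i - C i ≤ n := by
    intro i hi
    have : ∀ k, i + k - C (i + k) ≥ i - C i := by
      intro k
      induction k with
      | zero => simp
      | succ k ih =>
        have := Cle (i+k); have := Cs (i + k)
        rw [← add_assoc]
        split_ifs at this <;> omega
    have h := this (2 * n - i)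
    rw [Nat.add_sub_cancel' hi, C2n] at h
    omega
  have Wlow : ∀ i, u (C i) ≤ W i := by
    intro i; simp only [hW]; split_ifs <;> omega
  have Wup' : ∀ i, W i ≤ u (C i) + D * (i - C i) := by
    intro i; simp only [hW]; split_ifs <;> omega
  have Wup : ∀ i ≤ 2 * n, W i ≤ u (C i) + n * D := by
    intro i hi
    have := Nat.mul_le_mul_left D (CD i hi)
    have := Wup' i
    rw [mul_comm n D]; omega
  have W0 : W 0 = 0 := by simp [hW, C0, u0]
  have Wp : ∀ i ∈ p, W (i + 1) = u (C i + 1) := by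
    intro i hi
    have := Cs i
    simp only [hi, if_true] at this
    simp [hW, hi, this]
  have Wstep : ∀ i < 2 * n, W i + D ≤ W (i + 1) := by
    intro i hi
    by_cases h : i ∈ p
    · rw [Wp i h]
      have h1 : C i < n := by
        have := Cs i; simp only [h, if_true] at this
        have := Cn (i+1) hi; omega
      have h2 := ugap _ h1
      have h3 := Wup i hi.le
      have h4 : n * D + D ≤ n * (n * D) := by nlinarith [Nat.mul_le_mul hn (le_refl (n * D))]
      omega
    · have h1 : C (i+1) = C i := by rw [Cs i]; simp [h]
      have h2 : W (i+1) = u (C i) + D * (i + 1 - C i) := by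
        simp [hW, h, h1]
      have h3 : i + 1 - C i = (i - C i) + 1 := by have := Cle i; omega
      have h4 := Wup' i
      rw [h2, h3, Nat.mul_add]; omega
  have Wgap : ∀ i j, i < j → j ≤ 2 * n → W i + D ≤ W j := by
    intro i j hij
    induction j, hij using Nat.le_induction with
    | base => intro h; exact Wstep i h
    | succ j hj ih =>
      intro h
      have := ih (by omega); have := Wstep j (by omega); omega
  set f : ℕ → ℕ := fun i => Nat.nth (· ∈ X) (W (i + 1)) with hf
  have fmono : ∀ i j, i < j → j < 2 * n → f i < f j := by
    intro i j hij hj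
    apply hm
    have := Wgap (i+1) (j+1) (by omega) (by omega)
    omega
  obtain ⟨zc, zn⟩ := nth_image f (2 * n) fmono
  set z := (Finset.range (2 * n)).image f with hz
  have finj : ∀ s ⊆ Finset.range (2 * n), (s.image f).card = s.card := by
    intro s hs
    apply Finset.card_image_of_injOn
    intro a ha b hb hab
    have ha := Finset.mem_range.1 (hs ha)
    have hb := Finset.mem_range.1 (hs hb)
    rcases lt_trichotomy a b with h | h | h
    · have := fmono a b h hb; omega
    · exact h
    · have := fmono b a h ha; omega
  have imz : ∀ s ⊆ Finset.range (2 * n), s.image (nth z) = s.image f := by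
    intro s hs
    apply Finset.image_congr
    intro a ha
    exact zn a (Finset.mem_range.1 (hs ha))
  refine ⟨q.image f, ?_, ?_, ?_, ?_, z, ?_, zc, ?_, ?_⟩
  · intro b hb
    simp only [Finset.coe_image, Set.mem_image, Finset.mem_coe] at hb
    obtain ⟨i, hi, rfl⟩ := hb
    refine ⟨Nat.nth_mem_of_infinite hX _, ?_⟩
    have := Wgap 0 (i+1) (by omega) (by have := Finset.mem_range.1 (hq1 hi); omega)
    rw [Set.mem_singleton_iff, he]
    exact (hm (by omega)).ne'
  · rw [finj q hq1, hq2]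
  · rw [sparsity_iff]
    have hall : ∀ a ∈ (q.image f ∪ {e} : Finset ℕ), ∃ i ≤ 2 * n, a = Nat.nth (· ∈ X) (W i) := by
      intro a ha
      rcases Finset.mem_union.1 ha with h | h
      · obtain ⟨i, hi, rfl⟩ := Finset.mem_image.1 h
        exact ⟨i+1, Finset.mem_range.1 (hq1 hi), rfl⟩
      · refine ⟨0, by omega, ?_⟩
        rw [W0, ← he]; exact Finset.mem_singleton.1 h
    intro a ha b hb hab
    obtain ⟨i, hi, rfl⟩ := hall a ha
    obtain ⟨j, hj, rfl⟩ := hall b hb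
    rcases lt_trichotomy i j with h | h | h
    · have := Wgap i j h hj
      rw [rho_nth X hX _ _ (by omega)]; omega
    · subst h; exact absurd rfl hab
    · have := Wgap j i h hi
      rw [rho_comm', rho_nth X hX _ _ (by omega)]; omega
  · unfold rfun
    apply Finset.sup_le
    intro b hb
    obtain ⟨i, hi, rfl⟩ := Finset.mem_image.1 hb
    have hi' : i + 1 ≤ 2 * n := Finset.mem_range.1 (hq1 hi)
    have hlow := Wlow (i+1)
    have hup := Wup (i+1) hi'
    have hmem : Nat.nth (· ∈ X) (u (C (i+1))) ∈ (x ∪ {e} : Finset ℕ) := by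
      have := Cn (i+1) hi'
      rcases hc : C (i+1) with _ | c
      · rw [u0, ← he]; simp
      · exact Finset.mem_union_left _ (umem c (by omega))
    refine (Nat.sInf_le (Set.mem_image_of_mem _
      (show _ ∈ {a : ℕ | a ∈ (x ∪ {e} : Finset ℕ) ∧ a ≤ f i} from
        ⟨hmem, hm.monotone hlow⟩))).trans ?_
    show rho X _ (Nat.nth (· ∈ X) (W (i+1))) ≤ _
    rw [rho_nth X hX _ _ hlow]; omega
  · intro b hb
    simp only [hz, Finset.coe_image, Set.mem_image] at hb
    obtain ⟨i, _, rfl⟩ := hb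
    exact Nat.nth_mem_of_infinite hX _
  · rw [imz p hp1]
    apply Finset.eq_of_subset_of_card_le
    · intro b hb
      obtain ⟨i, hi, rfl⟩ := Finset.mem_image.1 hb
      simp only [hf]
      rw [Wp i hi]
      apply umem
      have := Cs i; simp only [hi, if_true] at this
      have := Cn (i+1) (Finset.mem_range.1 (hp1 hi)); omega
    · rw [finj p hp1, hp2, hxc]
  · exact imz q hq1

/-- given `l ≥ 1`, `x ∈ [X⁻]^n` with `d(x) ≥ n^{2l}`, and pairs
`(p_i, q_i) ∈ [2n]^n × [2n]^n` (`i < l`) with `Q ⊆ Q_{p_i q_i}`, there is a `2l`-cascade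
`x_0, …, x_l` with `x_0 = x` and `x_i →_{p_i q_i} x_{i+1}` for all `i < l`. -/
theorem stmt_8 (n : ℕ) (hn : 2 ≤ n) (P : Set (Set (Finset ℕ)))
    (hP : IsPartitionOn (cube n) P) (Q : Set (Finset ℕ)) (hQ : Q ∈ Atoms n P)
    (X : Set ℕ) (hX : X.Infinite)
    (hXQ : ∀ z : Finset ℕ, ↑z ⊆ X → z.card = 2 * n → z ∈ Q)
    (e : ℕ) (he : e = sInf X)
    (l : ℕ) (hl : 1 ≤ l)
    (x : Finset ℕ) (hx : ↑x ⊆ X \ {e}) (hxc : x.card = n)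
    (hd : ((n ^ (2 * l) : ℕ) : ℕ∞) ≤ sparsity X e x)
    (pq : ℕ → Finset ℕ × Finset ℕ)
    (hpq : ∀ i < l, (pq i).1 ∈ idx n ∧ (pq i).2 ∈ idx n ∧ Q ⊆ Qpq n P (pq i).1 (pq i).2) :
    ∃ xs : ℕ → Finset ℕ, xs 0 = x ∧ IsCascade n P Q X e (2 * l) l xs ∧
      ∀ i < l, Arrow X n (pq i).1 (pq i).2 (xs i) (xs (i + 1)) := by
  have he' : e = Nat.nth (· ∈ X) 0 := by rw [he, Nat.nth_zero]; rfl
  clear hl he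
  induction l generalizing x pq with
  | zero =>
    refine ⟨fun _ => x, rfl, ⟨fun i _ => ⟨hx, hxc⟩, fun i hi => absurd hi (by omega)⟩,
      fun i hi => absurd hi (by omega)⟩
  | succ l ih =>
    have hpow : n ^ (2 * (l + 1)) = n * (n * n ^ (2 * l)) := by ring
    obtain ⟨hp0, hq0, hQ0⟩ := hpq 0 (by omega)
    obtain ⟨y, hy, hyc, hyd, hyr, hya⟩ := step n hn (n ^ (2 * l)) (Nat.one_le_pow _ _ (by omega))
      X hX e he' x hx hxc (by rw [← hpow]; exact hd) _ _ hp0 hq0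
    obtain ⟨ys, ys0, ⟨hc1, hc2⟩, hc3⟩ := ih y hy hyc hyd (fun i => pq (i + 1))
      (fun i hi => hpq (i + 1) (by omega))
    refine ⟨fun i => Nat.casesOn i x ys, rfl, ⟨?_, ?_⟩, ?_⟩
    · intro i hi
      rcases i with _ | i
      · exact ⟨hx, hxc⟩
      · exact hc1 i (by omega)
    · intro i hi
      rcases i with _ | i
      · refine ⟨hd, ?_, _, hp0, _, hq0, hQ0, ?_⟩
        · show rfun X e x (ys 0) ≤ _
          rw [ys0]
          refine hyr.trans (le_of_eq ?_)
          have : 2 * (l + 1) - 2 * 0 - 1 = 2 * l + 1 := by omega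
          rw [this]; ring
        · show Arrow X n _ _ x (ys 0)
          rw [ys0]; exact hya
      · have h := hc2 i (by omega)
        have : 2 * (l + 1) - 2 * (i + 1) = 2 * l - 2 * i := by omega
        rw [this]; exact h
    · intro i hi
      rcases i with _ | i
      · show Arrow X n _ _ x (ys 0)
        rw [ys0]; exact hya
      · exact hc3 i (by omega)
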